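/- Let 0 < γ < 1, let a < b, c < d, and let u be six times continuously differentiable on [a, b] × [c, d]. For positive integers M_x, M_y set h_x = (b − a)/M_x, h_y = (d − c)/M_y, x_{l/2} = a + l h_x/2 (l = 0, …, 2M_x), y_{r/2} = c + r h_y/2 (r = 0, …, 2M_y), and let u_Q be the piecewise Lagrange quadratic interpolant of u on this tensor grid. Then there is a constant C > 0, depending only on u, γ, a, b, c, d, such that for all M_x, M_y ≥ 1 and all indices 1 ≤ i ≤ 2M_x − 1, 1 ≤ j ≤ 2M_y − 1, |∫_c^d ∫_a^b (u(x, y) − u_Q(x, y)) · |x_{i/2} − x|^{−γ} |y_{j/2} − y|^{−γ} dx dy| ≤ C (h_x^4 (η_{i/2})^{−γ} + h_y^4 (η̃_{j/2})^{−γ} + h_x^{5−γ} + h_y^{5−γ}), where η_{i/2} = min{x_{i/2} − a, b − x_{i/2}} and η̃_{j/2} = min{y_{j/2} − c, d − y_{j/2}}. -/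

import Mathlib

open MeasureTheory

/-- The piecewise quadratic Lagrange basis function attached to the node
`a + l·h/2` of the grid with integer nodes `a + k·h` (`k = 0, …, M`) and
half-integer midpoints. For odd `l` it is the interior bump
`4(x − x_{(l−1)/2})(x_{(l+1)/2} − x)/h²` on its cell, and for even `l` it is the
usual quadratic nodal basis function supported on the two adjacent cells. -/
noncomputable def quadBasis (a h : ℝ) (l : ℕ) (x : ℝ) : ℝ :=
  if l % 2 = 1 then
    if a + ((l : ℝ) - 1) * h / 2 ≤ x ∧ x ≤ a + ((l : ℝ) + 1) * h / 2 then
      4 * (x - (a + ((l : ℝ) - 1) * h / 2)) * ((a + ((l : ℝ) + 1) * h / 2) - x) / h ^ 2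
    else 0
  else
    if a + ((l : ℝ) - 2) * h / 2 ≤ x ∧ x ≤ a + (l : ℝ) * h / 2 then
      (x - (a + ((l : ℝ) - 2) * h / 2)) *
        (2 * x - ((a + (l : ℝ) * h / 2) + (a + ((l : ℝ) - 2) * h / 2))) / h ^ 2
    else if a + (l : ℝ) * h / 2 ≤ x ∧ x ≤ a + ((l : ℝ) + 2) * h / 2 then
      ((a + ((l : ℝ) + 2) * h / 2) - x) *
        (((a + ((l : ℝ) + 2) * h / 2) + (a + (l : ℝ) * h / 2)) - 2 * x) / h ^ 2
    else 0

/-- The piecewise Lagrange quadratic interpolant of `u` on the tensor grid with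
nodes `(a + l·h_x/2, c + r·h_y/2)`, `l = 0, …, 2M_x`, `r = 0, …, 2M_y`. -/
noncomputable def quadInterp (a c hx hy : ℝ) (Mx My : ℕ) (u : ℝ → ℝ → ℝ)
    (x y : ℝ) : ℝ :=
  ∑ l ∈ Finset.range (2 * Mx + 1), ∑ r ∈ Finset.range (2 * My + 1),
    quadBasis a hx l x * quadBasis c hy r y *
      u (a + (l : ℝ) * hx / 2) (c + (r : ℝ) * hy / 2)

/-!
On a cell, the quadratic interpolation error of `f` is `f⁽³⁾ / 6` times the cubic vanishing at the
three nodes, up to `O(h⁴)`. Take `f⁽³⁾` at the singularity `ξ` of the kernel, for all cells at once: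
the moment of the cubic over a cell at distance `r` from `ξ` is `O(h⁴ / r)` times the mass of the
kernel there, which absorbs the resulting factor `r`. It remains to sum the moments with a constant
coefficient. The cubic is odd about the midpoint of its cell, so cells placed symmetrically about a
node `ξ` cancel. The cells left over are all on one side of `ξ`, at distance at least `η` from it.
As the cubic has mean zero and the kernel `κ` decreases, their moments telescope to at most
`h⁴ κ(η)`. In two dimensions the error is the sum of the `x`-interpolation error and the
`x`-interpolant of the `y`-interpolation error, and the estimate applies to each slice.
-/

open Set

/-- The even, positive kernels `κ` with an integrable singularity at the origin for which `κ s`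
decreases and `s * κ s` increases on `(0, ∞)`. They abstract the kernel `|s| ^ (-γ)`. The value
`κ 0` is immaterial to the integrals, and is only asked to be nonnegative. -/
structure IsWeaklySingular (κ : ℝ → ℝ) : Prop where
  even : Function.Even κ
  zero_nonneg : 0 ≤ κ 0
  pos : ∀ ⦃s⦄, 0 < s → 0 < κ s
  antitoneOn : AntitoneOn κ (Ioi 0)
  monotoneOn_mul : MonotoneOn (fun s => s * κ s) (Ioi 0)
  intervalIntegrable : ∀ p q, IntervalIntegrable κ volume p q

theorem isWeaklySingular_abs_rpow_neg {γ : ℝ} (hγ0 : 0 ≤ γ) (hγ1 : γ < 1) :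
    IsWeaklySingular fun s : ℝ => |s| ^ (-γ) where
  even s := by simp only [abs_neg]
  zero_nonneg := Real.rpow_nonneg (abs_nonneg _) _
  pos s hs := Real.rpow_pos_of_pos (abs_pos.2 hs.ne') _
  antitoneOn s hs t _ hst := by
    rw [mem_Ioi] at hs
    simpa only [abs_of_pos hs, abs_of_pos (hs.trans_le hst)] using
      Real.rpow_le_rpow_of_nonpos hs hst (neg_nonpos.2 hγ0)
  monotoneOn_mul s hs t _ hst := by
    have mul_rpow {r : ℝ} (hr : 0 < r) : r * |r| ^ (-γ) = r ^ (1 - γ) := by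
      rw [abs_of_pos hr, sub_eq_add_neg, Real.rpow_add hr, Real.rpow_one]
    rw [mem_Ioi] at hs
    simpa only [mul_rpow hs, mul_rpow (hs.trans_le hst)] using
      Real.rpow_le_rpow hs.le hst (sub_nonneg.2 hγ1.le)
  intervalIntegrable p q := by
    refine intervalIntegrable_of_even (f := fun s : ℝ => |s| ^ (-γ))
      (fun s => by simp only [abs_neg]) fun r hr => ?_
    refine (intervalIntegral.intervalIntegrable_rpow' (r := -γ) (by linarith)).congr fun t ht => ?_
    rw [uIoc_of_le hr.le] at ht
    simp only [abs_of_pos ht.1]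

namespace IsWeaklySingular

variable {κ : ℝ → ℝ}

theorem nonneg (hκ : IsWeaklySingular κ) (s : ℝ) : 0 ≤ κ s := by
  rcases lt_trichotomy s 0 with hs | rfl | hs
  · exact hκ.even s ▸ (hκ.pos (neg_pos.2 hs)).le
  · exact hκ.zero_nonneg
  · exact (hκ.pos hs).le

theorem intervalIntegrable_add_left (hκ : IsWeaklySingular κ) (s p q : ℝ) :
    IntervalIntegrable (fun t => κ (s + t)) volume p q := by
  simpa using (hκ.intervalIntegrable (s + p) (s + q)).comp_add_left s

theorem intervalIntegrable_sub_left (hκ : IsWeaklySingular κ) (s p q : ℝ) :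
    IntervalIntegrable (fun t => κ (s - t)) volume p q := by
  simpa using (hκ.intervalIntegrable (s - p) (s - q)).comp_sub_left s

theorem integral_sub_left_le (hκ : IsWeaklySingular κ) {a b ξ : ℝ} (hξ : ξ ∈ Icc a b) :
    ∫ x in a..b, κ (ξ - x) ≤ ∫ t in (-(b - a))..(b - a), κ t := by
  rw [intervalIntegral.integral_comp_sub_left]
  exact intervalIntegral.integral_mono_interval (by linarith [hξ.1]) (by linarith [hξ.1, hξ.2])
    (by linarith [hξ.2]) (Filter.Eventually.of_forall hκ.nonneg) (hκ.intervalIntegrable _ _)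

end IsWeaklySingular

/-- The monic cubic vanishing at the three interpolation nodes of a cell of length `h`, in the
local coordinate `t` of the cell. The quadratic interpolation error is, to leading order,
a multiple of it. -/
noncomputable def nodalCubic (h t : ℝ) : ℝ :=
  t * (t - h / 2) * (t - h)

@[fun_prop]
theorem continuous_nodalCubic (h : ℝ) : Continuous (nodalCubic h) := by
  unfold nodalCubic
  fun_prop

theorem nodalCubic_sub_left (h t : ℝ) : nodalCubic h (h - t) = -nodalCubic h t := by
  unfold nodalCubic
  ring

theorem abs_nodalCubic_le {h t : ℝ} (ht : t ∈ Icc 0 h) : |nodalCubic h t| ≤ h ^ 3 := by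
  obtain ⟨ht0, hth⟩ := ht
  have hh : 0 ≤ h := ht0.trans hth
  have h0 : |t| ≤ h := abs_le.2 ⟨by linarith, hth⟩
  have h1 : |t - h / 2| ≤ h := abs_le.2 ⟨by linarith, by linarith⟩
  have h2 : |t - h| ≤ h := abs_le.2 ⟨by linarith, by linarith⟩
  calc |nodalCubic h t| = |t| * |t - h / 2| * |t - h| := by rw [nodalCubic, abs_mul, abs_mul]
    _ ≤ h * h * h := by gcongr
    _ = h ^ 3 := by ring

theorem integral_nodalCubic (h : ℝ) : ∫ t in (0 : ℝ)..h, nodalCubic h t = 0 := by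
  have hodd : ∫ t in (0 : ℝ)..h, nodalCubic h t = -∫ t in (0 : ℝ)..h, nodalCubic h t := by
    simpa [nodalCubic_sub_left] using
      (intervalIntegral.integral_comp_sub_left (a := 0) (b := h) (nodalCubic h) h).symm
  linarith

/-- The moment of `nodalCubic` against the kernel `κ` over a cell of length `h` whose left end has
position `s` relative to the singularity of the kernel. -/
noncomputable def cellMoment (κ : ℝ → ℝ) (h s : ℝ) : ℝ :=
  ∫ t in (0 : ℝ)..h, nodalCubic h t * κ (s + t)

theorem integral_comp_neg_sub_add {κ : ℝ → ℝ} (hκ : Function.Even κ) (g : ℝ → ℝ) (h s : ℝ) :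
    ∫ t in (0 : ℝ)..h, g t * κ (-s - h + t) = ∫ t in (0 : ℝ)..h, g (h - t) * κ (s + t) := by
  have hsub := intervalIntegral.integral_comp_sub_left (a := 0) (b := h)
    (fun t => g t * κ (-s - h + t)) h
  rw [sub_self, sub_zero] at hsub
  rw [← hsub]
  congr 1 with t
  rw [← hκ (s + t)]
  congr 2
  ring

theorem cellMoment_neg_sub {κ : ℝ → ℝ} (hκ : Function.Even κ) (h s : ℝ) :
    cellMoment κ h (-s - h) = -cellMoment κ h s := by
  simp only [cellMoment, integral_comp_neg_sub_add hκ, nodalCubic_sub_left, neg_mul,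
    intervalIntegral.integral_neg]

theorem sum_cellMoment_reflect {κ : ℝ → ℝ} (hκ : Function.Even κ) (h z : ℝ) (n : ℕ) :
    ∑ l ∈ Finset.range n, cellMoment κ h ((2 * l - (2 * n - z)) * h / 2) =
      -∑ l ∈ Finset.range n, cellMoment κ h ((2 * l - z) * h / 2) := by
  rw [← Finset.sum_range_reflect, ← Finset.sum_neg_distrib]
  refine Finset.sum_congr rfl fun l hl => ?_
  have hln : l + 1 ≤ n := Finset.mem_range.1 hl
  rw [← cellMoment_neg_sub hκ, Nat.sub_sub, add_comm 1 l, Nat.cast_sub hln]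
  congr 1
  push_cast
  ring

theorem sum_cellMoment_symm {κ : ℝ → ℝ} (hκ : Function.Even κ) (h : ℝ) (n : ℕ) :
    ∑ l ∈ Finset.range n, cellMoment κ h ((2 * l - n) * h / 2) = 0 := by
  have hodd := sum_cellMoment_reflect hκ h n n
  rw [two_mul (n : ℝ), add_sub_cancel_right] at hodd
  linarith

namespace IsWeaklySingular

variable {κ : ℝ → ℝ} {h s : ℝ}

theorem abs_cellMoment_le (hκ : IsWeaklySingular κ) (hh : 0 ≤ h) (s : ℝ) :
    |cellMoment κ h s| ≤ h ^ 3 * ∫ t in (0 : ℝ)..h, κ (s + t) := by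
  rw [cellMoment, ← intervalIntegral.integral_const_mul, ← Real.norm_eq_abs]
  refine intervalIntegral.norm_integral_le_of_norm_le hh (Filter.Eventually.of_forall ?_)
    ((hκ.intervalIntegrable_add_left s 0 h).const_mul _)
  intro t ht
  rw [Real.norm_eq_abs, abs_mul, abs_of_nonneg (hκ.nonneg _)]
  exact mul_le_mul_of_nonneg_right (abs_nodalCubic_le ⟨ht.1.le, ht.2⟩) (hκ.nonneg _)

/- The cubic has mean zero, so only the oscillation of the kernel over the cell contributes. -/
theorem abs_cellMoment_le_sub (hκ : IsWeaklySingular κ) (hh : 0 ≤ h) (hs : 0 < s) :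
    |cellMoment κ h s| ≤ h ^ 4 * (κ s - κ (s + h)) := by
  have hmoment : cellMoment κ h s =
      ∫ t in (0 : ℝ)..h, nodalCubic h t * (κ (s + t) - κ (s + h)) := by
    simp only [mul_sub]
    rw [intervalIntegral.integral_sub, intervalIntegral.integral_mul_const, integral_nodalCubic,
      zero_mul, sub_zero, cellMoment]
    · exact (hκ.intervalIntegrable_add_left s 0 h).continuousOn_mul (by fun_prop)
    · exact Continuous.intervalIntegrable (by fun_prop) _ _
  have hbound : ∀ t ∈ uIoc 0 h, ‖nodalCubic h t * (κ (s + t) - κ (s + h))‖ ≤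
      h ^ 3 * (κ s - κ (s + h)) := by
    intro t ht
    rw [uIoc_of_le hh] at ht
    obtain ⟨ht0, hth⟩ := ht
    have hst : 0 < s + t := add_pos hs ht0
    have hlow : κ (s + h) ≤ κ (s + t) :=
      hκ.antitoneOn hst (hst.trans_le (by gcongr)) (by gcongr)
    have hupp : κ (s + t) ≤ κ s := hκ.antitoneOn hs hst (le_add_of_nonneg_right ht0.le)
    rw [Real.norm_eq_abs, abs_mul, abs_of_nonneg (sub_nonneg.2 hlow)]
    exact mul_le_mul (abs_nodalCubic_le ⟨ht0.le, hth⟩) (by gcongr) (sub_nonneg.2 hlow)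
      (by positivity)
  calc |cellMoment κ h s| ≤ h ^ 3 * (κ s - κ (s + h)) * |h - 0| := by
        rw [hmoment]
        exact intervalIntegral.norm_integral_le_of_norm_le_const hbound
    _ = h ^ 4 * (κ s - κ (s + h)) := by rw [sub_zero, abs_of_nonneg hh]; ring

theorem mul_le_integral (hκ : IsWeaklySingular κ) (hh : 0 ≤ h) (hs : 0 < s) :
    h * κ (s + h) ≤ ∫ t in (0 : ℝ)..h, κ (s + t) := by
  have hmono := intervalIntegral.integral_mono_on hh
    (intervalIntegrable_const (μ := volume) (c := κ (s + h)))
    (hκ.intervalIntegrable_add_left s 0 h) fun t ht =>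
      hκ.antitoneOn (add_pos_of_pos_of_nonneg hs ht.1) (add_pos_of_pos_of_nonneg hs hh)
        (add_le_add_right ht.2 s)
  simpa using hmono

theorem abs_mul_abs_cellMoment_le_of_half_le (hκ : IsWeaklySingular κ) (hh : 0 < h)
    (hs : h / 2 ≤ s) :
    |s + h / 2| * |cellMoment κ h s| ≤ 2 * h ^ 4 * ∫ t in (0 : ℝ)..h, κ (s + t) := by
  have hs0 : 0 < s := (half_pos hh).trans_le hs
  have hosc : s * (κ s - κ (s + h)) ≤ h * κ (s + h) := by
    have : s * κ s ≤ (s + h) * κ (s + h) :=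
      hκ.monotoneOn_mul hs0 (add_pos hs0 hh) (le_add_of_nonneg_right hh.le)
    linarith
  calc |s + h / 2| * |cellMoment κ h s| ≤ (2 * s) * (h ^ 4 * (κ s - κ (s + h))) := by
        gcongr
        · rw [abs_of_pos (by linarith)]
          linarith
        · exact hκ.abs_cellMoment_le_sub hh.le hs0
    _ = 2 * h ^ 4 * (s * (κ s - κ (s + h))) := by ring
    _ ≤ 2 * h ^ 4 * ∫ t in (0 : ℝ)..h, κ (s + t) := by
        gcongr
        exact hosc.trans (hκ.mul_le_integral hh.le hs0)

theorem abs_mul_abs_cellMoment_le (hκ : IsWeaklySingular κ) (hh : 0 < h) (s : ℝ) :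
    |s + h / 2| * |cellMoment κ h s| ≤ 2 * h ^ 4 * ∫ t in (0 : ℝ)..h, κ (s + t) := by
  rcases le_or_gt (h / 2) s with hright | hs
  · exact hκ.abs_mul_abs_cellMoment_le_of_half_le hh hright
  rcases le_or_gt (h / 2) (-s - h) with hleft | hs'
  · have hmid : |-s - h + h / 2| = |s + h / 2| := by
      rw [← abs_neg]
      congr 1
      ring
    have hint := integral_comp_neg_sub_add hκ.even (fun _ => 1) h s
    simp only [one_mul] at hint
    simpa only [cellMoment_neg_sub hκ.even, abs_neg, hmid, hint] using
      hκ.abs_mul_abs_cellMoment_le_of_half_le hh hleft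
  · have hnear : |s + h / 2| ≤ 2 * h := abs_le.2 ⟨by linarith, by linarith⟩
    calc |s + h / 2| * |cellMoment κ h s|
        ≤ (2 * h) * (h ^ 3 * ∫ t in (0 : ℝ)..h, κ (s + t)) := by
          gcongr
          exact hκ.abs_cellMoment_le hh.le s
      _ = 2 * h ^ 4 * ∫ t in (0 : ℝ)..h, κ (s + t) := by ring

theorem sum_abs_cellMoment_le (hκ : IsWeaklySingular κ) (hh : 0 ≤ h) (hs : 0 < s) (n : ℕ) :
    ∑ l ∈ Finset.range n, |cellMoment κ h (s + l * h)| ≤ h ^ 4 * κ s := by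
  calc ∑ l ∈ Finset.range n, |cellMoment κ h (s + l * h)|
      ≤ ∑ l ∈ Finset.range n, h ^ 4 * (κ (s + l * h) - κ (s + (l + 1 : ℕ) * h)) := by
        gcongr with l
        rw [Nat.cast_add_one, add_one_mul, ← add_assoc]
        exact hκ.abs_cellMoment_le_sub hh (by positivity)
    _ = h ^ 4 * (κ s - κ (s + n * h)) := by
        rw [← Finset.mul_sum, Finset.sum_range_sub']
        simp
    _ ≤ h ^ 4 * κ s := by
        gcongr
        exact sub_le_self _ (hκ.nonneg _)

theorem abs_sum_cellMoment_le_of_le (hκ : IsWeaklySingular κ) (hh : 0 < h) {n i : ℕ}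
    (hi : 0 < i) (hin : i ≤ n) :
    |∑ l ∈ Finset.range n, cellMoment κ h ((2 * l - i) * h / 2)| ≤ h ^ 4 * κ (i * h / 2) := by
  obtain ⟨m, rfl⟩ := Nat.exists_eq_add_of_le hin
  have hshift (l : ℕ) : (2 * ((i + l : ℕ) : ℝ) - i) * h / 2 = i * h / 2 + l * h := by
    push_cast
    ring
  simp only [Finset.sum_range_add, sum_cellMoment_symm hκ.even, zero_add, hshift]
  exact (Finset.abs_sum_le_sum_abs _ _).trans
    (hκ.sum_abs_cellMoment_le hh.le (by positivity) m)

theorem abs_sum_cellMoment_le (hκ : IsWeaklySingular κ) (hh : 0 < h) {n i : ℕ}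
    (hi : 0 < i) (hin : i < 2 * n) :
    |∑ l ∈ Finset.range n, cellMoment κ h ((2 * l - i) * h / 2)| ≤
      h ^ 4 * κ (min (i * h / 2) ((2 * n - i) * h / 2)) := by
  rcases le_total i n with hle | hle
  · have : (i : ℝ) ≤ n := mod_cast hle
    rw [min_eq_left (by gcongr; linarith)]
    exact hκ.abs_sum_cellMoment_le_of_le hh hi hle
  · have : (n : ℝ) ≤ i := mod_cast hle
    have hreflect := hκ.abs_sum_cellMoment_le_of_le hh (n := n) (i := 2 * n - i) (by omega)
      (by omega)
    rw [Nat.cast_sub hin.le, Nat.cast_mul, Nat.cast_ofNat, sum_cellMoment_reflect hκ.even,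
      abs_neg] at hreflect
    rwa [min_eq_right (by gcongr; linarith)]

end IsWeaklySingular

/-- The functions of class `C^{3,1}` on `s`, with `K` bounding both the third derivative and its
Lipschitz constant. This is the regularity which the one-dimensional error estimate needs. -/
structure HasLipschitzThirdDeriv (f : ℝ → ℝ) (s : Set ℝ) (K : ℝ) : Prop where
  contDiffOn : ContDiffOn ℝ 3 f s
  abs_deriv_le : ∀ ⦃x⦄, x ∈ s → |iteratedDerivWithin 3 f s x| ≤ K
  abs_deriv_sub_le : ∀ ⦃x⦄, x ∈ s → ∀ ⦃y⦄, y ∈ s →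
    |iteratedDerivWithin 3 f s x - iteratedDerivWithin 3 f s y| ≤ K * |x - y|

theorem HasLipschitzThirdDeriv.const_nonneg {f : ℝ → ℝ} {s : Set ℝ} {K x : ℝ}
    (hf : HasLipschitzThirdDeriv f s K) (hx : x ∈ s) : 0 ≤ K :=
  (abs_nonneg _).trans (hf.abs_deriv_le hx)

theorem abs_sub_le_of_abs_deriv_le_pow {g g' : ℝ → ℝ} {s : Set ℝ} (hs : Convex ℝ s) {C m x : ℝ}
    {n : ℕ} (hC : 0 ≤ C) (hm : m ∈ s) (hg : ∀ y ∈ s, HasDerivWithinAt g (g' y) s y)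
    (hbound : ∀ y ∈ s, |g' y| ≤ C * |y - m| ^ n) (hx : x ∈ s) :
    |g x - g m| ≤ C * |x - m| ^ (n + 1) := by
  have hsub : uIcc m x ⊆ s := by
    rw [← segment_eq_uIcc]
    exact hs.segment_subset hm hx
  have hmean := (convex_uIcc m x).norm_image_sub_le_of_norm_hasDerivWithin_le
    (fun y hy => (hg y (hsub hy)).mono hsub)
    (fun y hy => (hbound y (hsub hy)).trans <| mul_le_mul_of_nonneg_left
      (pow_le_pow_left₀ (abs_nonneg _) (abs_sub_left_of_mem_uIcc hy) n) hC)
    left_mem_uIcc right_mem_uIcc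
  rwa [mul_assoc, Real.norm_eq_abs (x - m), ← pow_succ] at hmean

theorem abs_sub_taylorWithinEval_le {s : Set ℝ} (hs : Convex ℝ s) (hus : UniqueDiffOn ℝ s)
    {f : ℝ → ℝ} {n : ℕ} {K m x : ℝ} (hf : ContDiffOn ℝ n f s) (hK : 0 ≤ K) (hm : m ∈ s)
    (hlip : ∀ y ∈ s, |iteratedDerivWithin n f s y - iteratedDerivWithin n f s m| ≤ K * |y - m|)
    (hx : x ∈ s) :
    |f x - taylorWithinEval f n s m x| ≤ K * |x - m| ^ (n + 1) := by
  induction n generalizing f x with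
  | zero => simpa using hlip x hx
  | succ n ih =>
    have hf' : ContDiffOn ℝ n (derivWithin f s) s := hf.derivWithin hus (by norm_cast)
    have hdiff : DifferentiableOn ℝ f s := hf.differentiableOn (by norm_cast)
    have hderiv : ∀ y ∈ s, HasDerivWithinAt (fun y => f y - taylorWithinEval f (n + 1) s m y)
        (derivWithin f s y - taylorWithinEval (derivWithin f s) n s m y) s y := fun y hy =>
      (hdiff y hy).hasDerivWithinAt.sub (hasDerivAt_taylorWithinEval_succ f n).hasDerivWithinAt
    have hbound : ∀ y ∈ s, |derivWithin f s y - taylorWithinEval (derivWithin f s) n s m y| ≤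
        K * |y - m| ^ (n + 1) := fun y hy =>
      ih hf' (by simpa only [iteratedDerivWithin_succ'] using hlip) hy
    simpa using abs_sub_le_of_abs_deriv_le_pow hs hK hm hderiv hbound hx

/-- The quadratic Lagrange interpolant of `f` at the nodes `p`, `p + h / 2`, `p + h`, evaluated at
`p + t`. -/
noncomputable def lagrangeQuad (f : ℝ → ℝ) (p h t : ℝ) : ℝ :=
  (1 - t / h) * (1 - 2 * (t / h)) * f p + 4 * (t / h) * (1 - t / h) * f (p + h / 2) +
    t / h * (2 * (t / h) - 1) * f (p + h)

@[fun_prop]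
theorem continuous_lagrangeQuad (f : ℝ → ℝ) (p h : ℝ) : Continuous (lagrangeQuad f p h) := by
  unfold lagrangeQuad
  fun_prop

theorem lagrangeQuad_sub (f g : ℝ → ℝ) (p h t : ℝ) :
    lagrangeQuad (fun x => f x - g x) p h t = lagrangeQuad f p h t - lagrangeQuad g p h t := by
  unfold lagrangeQuad
  ring

theorem abs_lagrangeQuad_le {R : ℝ → ℝ} {p h t B : ℝ} (hh : 0 < h) (ht : t ∈ Icc 0 h)
    (hR : ∀ x ∈ Icc p (p + h), |R x| ≤ B) : |lagrangeQuad R p h t| ≤ 3 * B := by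
  have hτ0 : 0 ≤ t / h := div_nonneg ht.1 hh.le
  have hτ1 : t / h ≤ 1 := (div_le_one hh).2 ht.2
  have hleft : |(1 - t / h) * (1 - 2 * (t / h))| ≤ 1 := abs_le.2 ⟨by nlinarith, by nlinarith⟩
  have hmid : |4 * (t / h) * (1 - t / h)| ≤ 1 :=
    abs_le.2 ⟨by nlinarith, by nlinarith [sq_nonneg (1 - 2 * (t / h))]⟩
  have hright : |t / h * (2 * (t / h) - 1)| ≤ 1 := abs_le.2 ⟨by nlinarith, by nlinarith⟩
  have weighted_le {w x : ℝ} (hw : |w| ≤ 1) (hx : x ∈ Icc p (p + h)) : |w * R x| ≤ B := by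
    rw [abs_mul]
    exact (mul_le_of_le_one_left (abs_nonneg _) hw).trans (hR x hx)
  calc |lagrangeQuad R p h t| ≤ B + B + B := by
        refine (abs_add_three _ _ _).trans (add_le_add_three ?_ ?_ ?_)
        · exact weighted_le hleft (left_mem_Icc.2 (by linarith))
        · exact weighted_le hmid ⟨by linarith, by linarith⟩
        · exact weighted_le hright (right_mem_Icc.2 (by linarith))
    _ = 3 * B := by ring

theorem taylorWithinEval_three_sub_lagrangeQuad (f : ℝ → ℝ) (s : Set ℝ) (p : ℝ) {h : ℝ}
    (hh : h ≠ 0) (t : ℝ) :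
    taylorWithinEval f 3 s (p + h / 2) (p + t) -
        lagrangeQuad (taylorWithinEval f 3 s (p + h / 2)) p h t =
      iteratedDerivWithin 3 f s (p + h / 2) / 6 * nodalCubic h t := by
  simp only [lagrangeQuad, nodalCubic, taylor_within_apply, Finset.sum_range_succ,
    Finset.sum_range_zero, Nat.factorial, smul_eq_mul]
  field_simp
  push_cast
  ring

namespace HasLipschitzThirdDeriv

variable {f κ : ℝ → ℝ} {s : Set ℝ} {K p h : ℝ}

theorem abs_sub_lagrangeQuad_sub_le (hf : HasLipschitzThirdDeriv f s K) (hs : Convex ℝ s)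
    (hus : UniqueDiffOn ℝ s) (hh : 0 < h) (hcell : Icc p (p + h) ⊆ s) {t : ℝ} (ht : t ∈ Icc 0 h) :
    |f (p + t) - lagrangeQuad f p h t -
        iteratedDerivWithin 3 f s (p + h / 2) / 6 * nodalCubic h t| ≤ K / 4 * h ^ 4 := by
  set m := p + h / 2 with hm
  have hms : m ∈ s := hcell ⟨by linarith, by linarith⟩
  have hK : 0 ≤ K := hf.const_nonneg hms
  have hrem : ∀ x ∈ Icc p (p + h), |f x - taylorWithinEval f 3 s m x| ≤ K / 16 * h ^ 4 := by
    intro x hx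
    calc |f x - taylorWithinEval f 3 s m x| ≤ K * |x - m| ^ 4 :=
          abs_sub_taylorWithinEval_le hs hus hf.contDiffOn hK hms
            (fun y hy => hf.abs_deriv_sub_le hy hms) (hcell hx)
      _ ≤ K * (h / 2) ^ 4 := by
          gcongr
          exact abs_le.2 ⟨by linarith [hx.1], by linarith [hx.2]⟩
      _ = K / 16 * h ^ 4 := by ring
  calc |f (p + t) - lagrangeQuad f p h t - iteratedDerivWithin 3 f s m / 6 * nodalCubic h t|
      = |(f (p + t) - taylorWithinEval f 3 s m (p + t)) -
          lagrangeQuad (fun x => f x - taylorWithinEval f 3 s m x) p h t| := by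
        rw [← taylorWithinEval_three_sub_lagrangeQuad f s p hh.ne' t, lagrangeQuad_sub, ← hm]
        congr 1
        ring
    _ ≤ K / 16 * h ^ 4 + 3 * (K / 16 * h ^ 4) := by
        refine (abs_sub _ _).trans (add_le_add (hrem _ ?_) (abs_lagrangeQuad_le hh ht hrem))
        exact ⟨by linarith [ht.1], by linarith [ht.2]⟩
    _ = K / 4 * h ^ 4 := by ring

/- Freezing the third derivative at the singularity `ξ` instead of the midpoint of the cell costs
a factor `|p + h / 2 - ξ|`, which the decay of the cell moments away from `ξ` compensates. -/
theorem abs_integral_sub_lagrangeQuad_mul_sub_le (hf : HasLipschitzThirdDeriv f s K)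
    (hκ : IsWeaklySingular κ) (hs : Convex ℝ s) (hus : UniqueDiffOn ℝ s) (hh : 0 < h)
    (hcell : Icc p (p + h) ⊆ s) {ξ : ℝ} (hξ : ξ ∈ s) :
    |(∫ t in (0 : ℝ)..h, (f (p + t) - lagrangeQuad f p h t) * κ (p - ξ + t)) -
        iteratedDerivWithin 3 f s ξ / 6 * cellMoment κ h (p - ξ)| ≤
      K * h ^ 4 * ∫ t in (0 : ℝ)..h, κ (p - ξ + t) := by
  set m := p + h / 2 with hm
  set D := iteratedDerivWithin 3 f s
  set I := ∫ t in (0 : ℝ)..h, κ (p - ξ + t)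
  have hms : m ∈ s := hcell ⟨by linarith, by linarith⟩
  have hK : 0 ≤ K := hf.const_nonneg hξ
  have hI : 0 ≤ I := intervalIntegral.integral_nonneg hh.le fun _ _ => hκ.nonneg _
  have hκint := hκ.intervalIntegrable_add_left (p - ξ) 0 h
  have hIscaled : ∫ t in (0 : ℝ)..h, K / 4 * h ^ 4 * κ (p - ξ + t) = K / 4 * h ^ 4 * I :=
    intervalIntegral.integral_const_mul _ _
  have hfcell : ContinuousOn (fun t => f (p + t)) (uIcc 0 h) := by
    refine hf.contDiffOn.continuousOn.comp (by fun_prop) fun t ht => hcell ?_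
    rw [uIcc_of_le hh.le] at ht
    exact ⟨by linarith [ht.1], by linarith [ht.2]⟩
  have htaylor : |(∫ t in (0 : ℝ)..h, (f (p + t) - lagrangeQuad f p h t) * κ (p - ξ + t)) -
      D m / 6 * cellMoment κ h (p - ξ)| ≤ K / 4 * h ^ 4 * I := by
    rw [cellMoment, ← intervalIntegral.integral_const_mul, ← intervalIntegral.integral_sub,
      ← hIscaled, ← Real.norm_eq_abs]
    · refine intervalIntegral.norm_integral_le_of_norm_le hh.le
        (Filter.Eventually.of_forall fun t ht => ?_) (hκint.const_mul _)
      rw [← mul_assoc, ← sub_mul, Real.norm_eq_abs, abs_mul, abs_of_nonneg (hκ.nonneg _)]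
      exact mul_le_mul_of_nonneg_right
        (hf.abs_sub_lagrangeQuad_sub_le hs hus hh hcell ⟨ht.1.le, ht.2⟩) (hκ.nonneg _)
    · exact hκint.continuousOn_mul (hfcell.sub (by fun_prop))
    · exact (hκint.continuousOn_mul (by fun_prop)).const_mul _
  have hfreeze : |(D m - D ξ) / 6 * cellMoment κ h (p - ξ)| ≤ K / 3 * h ^ 4 * I := by
    calc |(D m - D ξ) / 6 * cellMoment κ h (p - ξ)|
        = |D m - D ξ| / 6 * |cellMoment κ h (p - ξ)| := by
          rw [abs_mul, abs_div, abs_of_pos (by norm_num : (0 : ℝ) < 6)]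
      _ ≤ K * |m - ξ| / 6 * |cellMoment κ h (p - ξ)| := by
          gcongr
          exact hf.abs_deriv_sub_le hms hξ
      _ = K / 6 * (|p - ξ + h / 2| * |cellMoment κ h (p - ξ)|) := by
          rw [hm, add_sub_right_comm]
          ring
      _ ≤ K / 6 * (2 * h ^ 4 * I) :=
          mul_le_mul_of_nonneg_left (hκ.abs_mul_abs_cellMoment_le hh _) (by positivity)
      _ = K / 3 * h ^ 4 * I := by ring
  calc |(∫ t in (0 : ℝ)..h, (f (p + t) - lagrangeQuad f p h t) * κ (p - ξ + t)) -
        D ξ / 6 * cellMoment κ h (p - ξ)|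
      = |((∫ t in (0 : ℝ)..h, (f (p + t) - lagrangeQuad f p h t) * κ (p - ξ + t)) -
          D m / 6 * cellMoment κ h (p - ξ)) + (D m - D ξ) / 6 * cellMoment κ h (p - ξ)| := by
        congr 1
        ring
    _ ≤ K / 4 * h ^ 4 * I + K / 3 * h ^ 4 * I :=
        (abs_add_le _ _).trans (add_le_add htaylor hfreeze)
    _ ≤ K * h ^ 4 * I := by
        have : 0 ≤ K * h ^ 4 * I := by positivity
        linarith

end HasLipschitzThirdDeriv

/-- The distance from `x` to `x₀` in units of `r`, truncated at `1`. Since the truncation vanishes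
outside the support, the quadratic basis functions are polynomials in this distance. -/
noncomputable def truncDist (x₀ r x : ℝ) : ℝ :=
  min (|x - x₀| / r) 1

@[fun_prop]
theorem continuous_truncDist (x₀ r : ℝ) : Continuous (truncDist x₀ r) := by
  unfold truncDist
  fun_prop

theorem truncDist_mem_Icc (x₀ x : ℝ) {r : ℝ} (hr : 0 ≤ r) : truncDist x₀ r x ∈ Icc (0 : ℝ) 1 :=
  ⟨le_min (by positivity) zero_le_one, min_le_right _ _⟩

theorem truncDist_of_abs_le {x₀ r x : ℝ} (hr : 0 < r) (hx : |x - x₀| ≤ r) :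
    truncDist x₀ r x = |x - x₀| / r :=
  min_eq_left ((div_le_one hr).2 hx)

theorem truncDist_of_le_abs {x₀ r x : ℝ} (hr : 0 < r) (hx : r ≤ |x - x₀|) :
    truncDist x₀ r x = 1 :=
  min_eq_right ((one_le_div hr).2 hx)

section quadBasis

variable {a h t x : ℝ} {k M : ℕ}

theorem quadBasis_two_mul (hh : 0 < h) (q : ℕ) (x : ℝ) :
    quadBasis a h (2 * q) x =
      (1 - truncDist (a + q * h) h x) * (1 - 2 * truncDist (a + q * h) h x) := by
  have hpar : 2 * q % 2 ≠ 1 := by omega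
  have hlow : a + (((2 * q : ℕ) : ℝ) - 2) * h / 2 = a + q * h - h := by push_cast; ring
  have hmid : a + ((2 * q : ℕ) : ℝ) * h / 2 = a + q * h := by push_cast; ring
  have hupp : a + (((2 * q : ℕ) : ℝ) + 2) * h / 2 = a + q * h + h := by push_cast; ring
  rw [quadBasis, if_neg hpar, hlow, hmid, hupp]
  split_ifs with hleft hright
  · have hneg : x - (a + q * h) ≤ 0 := sub_nonpos.2 hleft.2
    rw [truncDist_of_abs_le hh (abs_le.2 ⟨by linarith [hleft.1], by linarith⟩),
      abs_of_nonpos hneg]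
    field_simp
    ring
  · have hpos : 0 ≤ x - (a + q * h) := sub_nonneg.2 hright.1
    rw [truncDist_of_abs_le hh (abs_le.2 ⟨by linarith, by linarith [hright.2]⟩),
      abs_of_nonneg hpos]
    field_simp
    ring
  · rw [truncDist_of_le_abs hh, sub_self, zero_mul]
    by_contra! hx
    obtain ⟨hx1, hx2⟩ := abs_lt.1 hx
    rcases le_total x (a + q * h) with hle | hle
    · exact hleft ⟨by linarith, hle⟩
    · exact hright ⟨hle, by linarith⟩

theorem quadBasis_two_mul_add_one (hh : 0 < h) (q : ℕ) (x : ℝ) :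
    quadBasis a h (2 * q + 1) x = 1 - truncDist (a + q * h + h / 2) (h / 2) x ^ 2 := by
  have hpar : (2 * q + 1) % 2 = 1 := by omega
  have hlow : a + (((2 * q + 1 : ℕ) : ℝ) - 1) * h / 2 = a + q * h + h / 2 - h / 2 := by
    push_cast
    ring
  have hupp : a + (((2 * q + 1 : ℕ) : ℝ) + 1) * h / 2 = a + q * h + h / 2 + h / 2 := by
    push_cast
    ring
  rw [quadBasis, if_pos hpar, hlow, hupp]
  split_ifs with hx
  · rw [truncDist_of_abs_le (half_pos hh) (abs_le.2 ⟨by linarith [hx.1], by linarith [hx.2]⟩),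
      div_pow, sq_abs]
    field_simp
    ring
  · rw [truncDist_of_le_abs (half_pos hh), one_pow, sub_self]
    by_contra! hlt
    obtain ⟨hx1, hx2⟩ := abs_lt.1 hlt
    exact hx ⟨by linarith, by linarith⟩

theorem continuous_quadBasis (hh : 0 < h) (l : ℕ) : Continuous (quadBasis a h l) := by
  obtain ⟨q, rfl | rfl⟩ := l.even_or_odd'
  · simp only [funext (quadBasis_two_mul hh q)]
    fun_prop
  · simp only [funext (quadBasis_two_mul_add_one hh q)]
    fun_prop

theorem abs_quadBasis_le_one (hh : 0 < h) (l : ℕ) (x : ℝ) : |quadBasis a h l x| ≤ 1 := by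
  obtain ⟨q, rfl | rfl⟩ := l.even_or_odd'
  · obtain ⟨h0, h1⟩ := truncDist_mem_Icc (a + q * h) x hh.le
    rw [quadBasis_two_mul hh]
    exact abs_le.2 ⟨by nlinarith, by nlinarith⟩
  · obtain ⟨h0, h1⟩ := truncDist_mem_Icc (a + q * h + h / 2) x (half_pos hh).le
    rw [quadBasis_two_mul_add_one hh]
    exact abs_le.2 ⟨by nlinarith, by nlinarith⟩

theorem le_abs_intCast_mul_add {n : ℤ} (hn : n ≠ 0) (hn' : n ≠ -1) (ht : t ∈ Icc 0 h) :
    h ≤ |n * h + t| := by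
  have hh : 0 ≤ h := ht.1.trans ht.2
  rcases (by omega : 1 ≤ n ∨ n ≤ -2) with hpos | hneg
  · have : (1 : ℝ) ≤ n := mod_cast hpos
    exact le_abs.2 (.inl (by nlinarith [ht.1]))
  · have : (n : ℝ) ≤ -2 := mod_cast hneg
    exact le_abs.2 (.inr (by nlinarith [ht.2]))

theorem quadBasis_cell_eq_zero (hh : 0 < h) (ht : t ∈ Icc 0 h) {l : ℕ}
    (hl : l ∉ Finset.Icc (2 * k) (2 * k + 2)) : quadBasis a h l (a + k * h + t) = 0 := by
  rw [Finset.mem_Icc, not_and_or, not_le, not_le] at hl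
  obtain ⟨q, rfl | rfl⟩ := l.even_or_odd'
  · rw [quadBasis_two_mul hh, truncDist_of_le_abs hh, sub_self, zero_mul]
    have hdist : a + k * h + t - (a + q * h) = ((k - q : ℤ) : ℝ) * h + t := by push_cast; ring
    rw [hdist]
    exact le_abs_intCast_mul_add (by omega) (by omega) ht
  · rw [quadBasis_two_mul_add_one hh, truncDist_of_le_abs (half_pos hh), one_pow, sub_self]
    rcases (by omega : k + 1 ≤ q ∨ q + 1 ≤ k) with hq | hq
    · have : (k : ℝ) + 1 ≤ q := mod_cast hq
      exact le_abs.2 (.inr (by nlinarith [ht.2]))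
    · have : (q : ℝ) + 1 ≤ k := mod_cast hq
      exact le_abs.2 (.inl (by nlinarith [ht.1]))

theorem quadBasis_cell_left (hh : 0 < h) (ht : t ∈ Icc 0 h) :
    quadBasis a h (2 * k) (a + k * h + t) = (1 - t / h) * (1 - 2 * (t / h)) := by
  rw [quadBasis_two_mul hh, truncDist_of_abs_le hh, add_sub_cancel_left, abs_of_nonneg ht.1]
  rw [add_sub_cancel_left, abs_of_nonneg ht.1]
  exact ht.2

theorem quadBasis_cell_mid (hh : 0 < h) (ht : t ∈ Icc 0 h) :
    quadBasis a h (2 * k + 1) (a + k * h + t) = 4 * (t / h) * (1 - t / h) := by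
  rw [quadBasis_two_mul_add_one hh, truncDist_of_abs_le (half_pos hh), div_pow, sq_abs]
  · field_simp
    ring
  · exact abs_le.2 ⟨by linarith [ht.1], by linarith [ht.2]⟩

theorem quadBasis_cell_right (hh : 0 < h) (ht : t ∈ Icc 0 h) :
    quadBasis a h (2 * k + 2) (a + k * h + t) = t / h * (2 * (t / h) - 1) := by
  have hdist : |a + k * h + t - (a + ((k + 1 : ℕ) : ℝ) * h)| = h - t := by
    rw [abs_of_nonpos] <;> push_cast <;> linarith [ht.2]
  rw [show 2 * k + 2 = 2 * (k + 1) by ring, quadBasis_two_mul hh,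
    truncDist_of_abs_le hh (by linarith [ht.1]), hdist]
  field_simp
  ring

theorem sum_range_eq_sum_Icc_of_cell (hk : k < M) {g : ℕ → ℝ}
    (hg : ∀ l ∉ Finset.Icc (2 * k) (2 * k + 2), g l = 0) :
    ∑ l ∈ Finset.range (2 * M + 1), g l = ∑ l ∈ Finset.Icc (2 * k) (2 * k + 2), g l := by
  refine (Finset.sum_subset (fun l hl => ?_) fun l _ hl => hg l hl).symm
  rw [Finset.mem_Icc] at hl
  exact Finset.mem_range.2 (by omega)

theorem exists_cell (hx : x ∈ Ioc a (a + M * h)) :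
    ∃ k < M, ∃ t ∈ Icc 0 h, x = a + k * h + t := by
  induction M with
  | zero => simp at hx
  | succ M ih =>
    push_cast at hx
    rcases le_or_gt x (a + M * h) with hle | hlt
    · obtain ⟨k, hk, t, ht, rfl⟩ := ih ⟨hx.1, hle⟩
      exact ⟨k, hk.trans M.lt_succ_self, t, ht, rfl⟩
    · exact ⟨M, M.lt_succ_self, x - (a + M * h), ⟨by linarith, by linarith [hx.2]⟩, by ring⟩

theorem sum_abs_quadBasis_le (hh : 0 < h) (hx : x ∈ Ioc a (a + M * h)) :
    ∑ l ∈ Finset.range (2 * M + 1), |quadBasis a h l x| ≤ 3 := by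
  obtain ⟨k, hk, t, ht, rfl⟩ := exists_cell hx
  rw [sum_range_eq_sum_Icc_of_cell hk fun l hl => abs_eq_zero.2 (quadBasis_cell_eq_zero hh ht hl)]
  refine (Finset.sum_le_card_nsmul _ _ 1 fun l _ => abs_quadBasis_le_one hh l _).trans_eq ?_
  rw [Nat.card_Icc, show 2 * k + 2 + 1 - 2 * k = 3 by omega]
  norm_num

end quadBasis

/-- The one-dimensional piecewise quadratic Lagrange interpolant of `f` on the grid with `M` cells
of length `h` starting at `a`. -/
noncomputable def quadInterpOne (a h : ℝ) (M : ℕ) (f : ℝ → ℝ) (x : ℝ) : ℝ :=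
  ∑ l ∈ Finset.range (2 * M + 1), quadBasis a h l x * f (a + l * h / 2)

theorem continuous_quadInterpOne {a h : ℝ} (hh : 0 < h) (M : ℕ) (f : ℝ → ℝ) :
    Continuous (quadInterpOne a h M f) :=
  continuous_finsetSum _ fun l _ => (continuous_quadBasis hh l).mul continuous_const

theorem quadInterpOne_cell {a h t : ℝ} {k M : ℕ} (hh : 0 < h) (hk : k < M) (ht : t ∈ Icc 0 h)
    (f : ℝ → ℝ) : quadInterpOne a h M f (a + k * h + t) = lagrangeQuad f (a + k * h) h t := by
  have hIcc : Finset.Icc (2 * k) (2 * k + 2) = {2 * k, 2 * k + 1, 2 * k + 2} := by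
    ext l
    simp only [Finset.mem_Icc, Finset.mem_insert, Finset.mem_singleton]
    omega
  have hleft : a + ((2 * k : ℕ) : ℝ) * h / 2 = a + k * h := by push_cast; ring
  have hmid : a + ((2 * k + 1 : ℕ) : ℝ) * h / 2 = a + k * h + h / 2 := by push_cast; ring
  have hright : a + ((2 * k + 2 : ℕ) : ℝ) * h / 2 = a + k * h + h := by push_cast; ring
  rw [quadInterpOne, sum_range_eq_sum_Icc_of_cell hk fun l hl => mul_eq_zero_of_left
      (quadBasis_cell_eq_zero hh ht hl) _, hIcc, Finset.sum_insert (by simp),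
    Finset.sum_pair (by simp), quadBasis_cell_left hh ht, quadBasis_cell_mid hh ht,
    quadBasis_cell_right hh ht, hleft, hmid, hright, lagrangeQuad, ← add_assoc]

theorem quadInterp_eq_sum (a c hx hy : ℝ) (Mx My : ℕ) (u : ℝ → ℝ → ℝ) (x y : ℝ) :
    quadInterp a c hx hy Mx My u x y =
      ∑ l ∈ Finset.range (2 * Mx + 1),
        quadBasis a hx l x * quadInterpOne c hy My (u (a + l * hx / 2)) y := by
  simp only [quadInterp, quadInterpOne, Finset.mul_sum, mul_assoc]

theorem integral_eq_sum_integral_cells {F : ℝ → ℝ} {a h : ℝ} {M : ℕ} (hh : 0 ≤ h)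
    (hF : IntervalIntegrable F volume a (a + M * h)) :
    ∫ x in a..a + M * h, F x = ∑ k ∈ Finset.range M, ∫ t in (0 : ℝ)..h, F (a + k * h + t) := by
  have hmono : Monotone fun k : ℕ => a + k * h := fun k l hkl => by
    have : (k : ℝ) ≤ l := mod_cast hkl
    dsimp only
    gcongr
  have hcells := intervalIntegral.sum_integral_adjacent_intervals (n := M) (f := F)
    (a := fun k : ℕ => a + k * h) (μ := volume) fun k hk => hF.mono_set <| by
      have hk0 := hmono k.zero_le
      have hkM := hmono (Nat.succ_le_of_lt hk)
      have hkk := hmono k.le_succ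
      simp only [Nat.cast_zero, zero_mul, add_zero] at hk0
      rw [uIcc_of_le hkk, uIcc_of_le (hk0.trans (hkk.trans hkM))]
      exact Icc_subset_Icc hk0 hkM
  simp only [Nat.cast_zero, zero_mul, add_zero] at hcells
  rw [← hcells]
  refine Finset.sum_congr rfl fun k _ => ?_
  rw [intervalIntegral.integral_comp_add_left, add_zero, Nat.cast_succ, add_one_mul, add_assoc]

/-- The integral of the quadratic interpolation error of `f` against the kernel `κ` with its
singularity at `ξ`. -/
noncomputable def weightedError (κ : ℝ → ℝ) (a h : ℝ) (M : ℕ) (f : ℝ → ℝ) (ξ : ℝ) : ℝ :=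
  ∫ x in a..a + M * h, (f x - quadInterpOne a h M f x) * κ (ξ - x)

/-- The weight which the product integration rule based on quadratic interpolation gives to the
node `a + l * h / 2`. -/
noncomputable def quadWeight (κ : ℝ → ℝ) (a h : ℝ) (M : ℕ) (ξ : ℝ) (l : ℕ) : ℝ :=
  ∫ x in a..a + M * h, quadBasis a h l x * κ (ξ - x)

/-- The mesh-independent constant in the one-dimensional error estimate on an interval of length
`ℓ`. As `κ ℓ` is the least value of `κ` on `(0, ℓ]`, it absorbs the mass of the kernel. -/
noncomputable def errorConst (κ : ℝ → ℝ) (ℓ : ℝ) : ℝ :=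
  (∫ t in (-ℓ)..ℓ, κ t) / κ ℓ + 1

section weightedError

variable {κ f : ℝ → ℝ} {a h K ξ : ℝ} {M i : ℕ}

theorem intervalIntegrable_sub_quadInterpOne_mul (hκ : IsWeaklySingular κ) (hh : 0 < h)
    (hf : ContinuousOn f (Icc a (a + M * h))) :
    IntervalIntegrable (fun x => (f x - quadInterpOne a h M f x) * κ (ξ - x)) volume a
      (a + M * h) := by
  rw [← uIcc_of_le (le_add_of_nonneg_right (by positivity))] at hf
  exact (hκ.intervalIntegrable_sub_left ξ _ _).continuousOn_mul
    (hf.fun_sub (continuous_quadInterpOne hh M f).continuousOn)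

theorem integral_quadInterpOne_mul (hκ : IsWeaklySingular κ) (hh : 0 < h) (M : ℕ) (f : ℝ → ℝ)
    (ξ : ℝ) :
    ∫ x in a..a + M * h, quadInterpOne a h M f x * κ (ξ - x) =
      ∑ l ∈ Finset.range (2 * M + 1), quadWeight κ a h M ξ l * f (a + l * h / 2) := by
  simp only [quadInterpOne, quadWeight, Finset.sum_mul, ← intervalIntegral.integral_mul_const]
  rw [intervalIntegral.integral_finsetSum]
  · simp only [mul_right_comm]
  · intro l _
    exact (hκ.intervalIntegrable_sub_left ξ _ _).continuousOn_mul
      ((continuous_quadBasis hh l).mul_const _).continuousOn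

theorem sum_abs_quadWeight_le (hκ : IsWeaklySingular κ) (hh : 0 < h) (M : ℕ) (ξ : ℝ) :
    ∑ l ∈ Finset.range (2 * M + 1), |quadWeight κ a h M ξ l| ≤
      3 * ∫ x in a..a + M * h, κ (ξ - x) := by
  have hab : a ≤ a + M * h := le_add_of_nonneg_right (by positivity)
  have hκint := hκ.intervalIntegrable_sub_left ξ a (a + M * h)
  have hφint : ∀ l, IntervalIntegrable (fun x => |quadBasis a h l x| * κ (ξ - x)) volume a
      (a + M * h) := fun l =>
    hκint.continuousOn_mul (continuous_quadBasis hh l).abs.continuousOn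
  calc ∑ l ∈ Finset.range (2 * M + 1), |quadWeight κ a h M ξ l|
      ≤ ∑ l ∈ Finset.range (2 * M + 1), ∫ x in a..a + M * h, |quadBasis a h l x| * κ (ξ - x) := by
        gcongr with l
        rw [quadWeight, ← Real.norm_eq_abs]
        refine intervalIntegral.norm_integral_le_of_norm_le hab
          (Filter.Eventually.of_forall fun x _ => ?_) (hφint l)
        rw [Real.norm_eq_abs, abs_mul, abs_of_nonneg (hκ.nonneg _)]
    _ = ∫ x in a..a + M * h,
          (∑ l ∈ Finset.range (2 * M + 1), |quadBasis a h l x|) * κ (ξ - x) := by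
        simp only [Finset.sum_mul]
        exact (intervalIntegral.integral_finsetSum fun l _ => hφint l).symm
    _ ≤ ∫ x in a..a + M * h, 3 * κ (ξ - x) := by
        refine intervalIntegral.integral_mono_on_of_le_Ioo hab ?_ (hκint.const_mul 3)
          fun x hx => ?_
        · exact hκint.continuousOn_mul
            (continuous_finsetSum _ fun l _ => (continuous_quadBasis hh l).abs).continuousOn
        · exact mul_le_mul_of_nonneg_right (sum_abs_quadBasis_le hh ⟨hx.1, hx.2.le⟩)
            (hκ.nonneg _)
    _ = 3 * ∫ x in a..a + M * h, κ (ξ - x) := intervalIntegral.integral_const_mul _ _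

theorem weightedError_eq_sub_sum (hκ : IsWeaklySingular κ) (hh : 0 < h)
    (hf : ContinuousOn f (Icc a (a + M * h))) :
    weightedError κ a h M f ξ = (∫ x in a..a + M * h, f x * κ (ξ - x)) -
      ∑ l ∈ Finset.range (2 * M + 1), quadWeight κ a h M ξ l * f (a + l * h / 2) := by
  have hκint := hκ.intervalIntegrable_sub_left ξ a (a + M * h)
  rw [← uIcc_of_le (le_add_of_nonneg_right (by positivity))] at hf
  simp only [weightedError, sub_mul]
  rw [intervalIntegral.integral_sub (hκint.continuousOn_mul hf)
    (hκint.continuousOn_mul (continuous_quadInterpOne hh M f).continuousOn),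
    integral_quadInterpOne_mul hκ hh]

theorem weightedError_eq_sum_cells (hκ : IsWeaklySingular κ) (hh : 0 < h)
    (hf : ContinuousOn f (Icc a (a + M * h))) :
    weightedError κ a h M f ξ = ∑ k ∈ Finset.range M, ∫ t in (0 : ℝ)..h,
      (f (a + k * h + t) - lagrangeQuad f (a + k * h) h t) * κ (a + k * h - ξ + t) := by
  rw [weightedError, integral_eq_sum_integral_cells hh.le
    (intervalIntegrable_sub_quadInterpOne_mul hκ hh hf)]
  refine Finset.sum_congr rfl fun k hk => intervalIntegral.integral_congr fun t ht => ?_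
  rw [uIcc_of_le hh.le] at ht
  rw [quadInterpOne_cell hh (Finset.mem_range.1 hk) ht, ← hκ.even (ξ - _), neg_sub,
    add_sub_right_comm]

theorem HasLipschitzThirdDeriv.abs_weightedError_sub_le
    (hf : HasLipschitzThirdDeriv f (Icc a (a + M * h)) K) (hκ : IsWeaklySingular κ) (hh : 0 < h)
    (hξ : ξ ∈ Icc a (a + M * h)) :
    |weightedError κ a h M f ξ - iteratedDerivWithin 3 f (Icc a (a + M * h)) ξ / 6 *
        ∑ k ∈ Finset.range M, cellMoment κ h (a + k * h - ξ)| ≤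
      K * h ^ 4 * ∫ x in a..a + M * h, κ (ξ - x) := by
  rcases M.eq_zero_or_pos with rfl | hM
  · simp [weightedError]
  have hab : a < a + M * h := lt_add_of_pos_right a (by positivity)
  have hκcells : ∫ x in a..a + M * h, κ (ξ - x) =
      ∑ k ∈ Finset.range M, ∫ t in (0 : ℝ)..h, κ (a + k * h - ξ + t) := by
    rw [integral_eq_sum_integral_cells hh.le (hκ.intervalIntegrable_sub_left ξ _ _)]
    simp only [← hκ.even (ξ - _), neg_sub, add_sub_right_comm]
  rw [weightedError_eq_sum_cells hκ hh hf.contDiffOn.continuousOn, Finset.mul_sum,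
    ← Finset.sum_sub_distrib, hκcells, Finset.mul_sum]
  refine (Finset.abs_sum_le_sum_abs _ _).trans (Finset.sum_le_sum fun k hk => ?_)
  have hk' : (k : ℝ) + 1 ≤ M := mod_cast Finset.mem_range.1 hk
  refine hf.abs_integral_sub_lagrangeQuad_mul_sub_le hκ (convex_Icc _ _) (uniqueDiffOn_Icc hab) hh
    (Icc_subset_Icc (le_add_of_nonneg_right (by positivity)) ?_) hξ
  rw [add_assoc, ← add_one_mul]
  gcongr

theorem mesh_pos_and_add_mul_mesh {b : ℝ} (hab : a < b) (hM : 0 < M) (hh : h = (b - a) / M) :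
    0 < h ∧ a + M * h = b := by
  have hM' : (0 : ℝ) < M := mod_cast hM
  subst hh
  exact ⟨div_pos (sub_pos.2 hab) hM', by rw [mul_div_cancel₀ _ hM'.ne', add_sub_cancel]⟩

theorem node_mem_Icc (a : ℝ) (hh : 0 ≤ h) (hi : i ≤ 2 * M) : a + i * h / 2 ∈ Icc a (a + M * h) := by
  have : (i : ℝ) ≤ 2 * M := mod_cast hi
  exact ⟨le_add_of_nonneg_right (by positivity), by nlinarith⟩

theorem min_node_sub_mem_Ioc (a : ℝ) (hh : 0 < h) (hi0 : 0 < i) (hi : i < 2 * M) :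
    min (a + i * h / 2 - a) (a + M * h - (a + i * h / 2)) ∈ Ioc 0 (M * h) := by
  have hi0' : (0 : ℝ) < i := mod_cast hi0
  have hi' : (i : ℝ) < 2 * M := mod_cast hi
  refine ⟨lt_min (by nlinarith) (by nlinarith), (min_le_right _ _).trans ?_⟩
  nlinarith

theorem min_node_sub_pos {b : ℝ} (hab : a < b) (hh : h = (b - a) / M) (hi0 : 0 < i)
    (hi : i < 2 * M) : 0 < min (a + i * h / 2 - a) (b - (a + i * h / 2)) := by
  obtain ⟨hh0, rfl⟩ := mesh_pos_and_add_mul_mesh hab (by omega) hh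
  exact (min_node_sub_mem_Ioc a hh0 hi0 hi).1

theorem HasLipschitzThirdDeriv.abs_weightedError_node_le
    (hf : HasLipschitzThirdDeriv f (Icc a (a + M * h)) K) (hκ : IsWeaklySingular κ) (hh : 0 < h)
    (hi0 : 0 < i) (hi : i < 2 * M) (hξ : ξ = a + i * h / 2) :
    |weightedError κ a h M f ξ| ≤
      K * h ^ 4 * ((∫ x in a..a + M * h, κ (ξ - x)) + κ (min (ξ - a) (a + M * h - ξ))) := by
  have hξmem : ξ ∈ Icc a (a + M * h) := hξ ▸ node_mem_Icc a hh.le hi.le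
  set D := iteratedDerivWithin 3 f (Icc a (a + M * h)) ξ
  set S := ∑ k ∈ Finset.range M, cellMoment κ h (a + k * h - ξ) with hS
  have hmoments : |S| ≤ h ^ 4 * κ (min (ξ - a) (a + M * h - ξ)) := by
    have harg (z : ℝ) : a + z * h - (a + i * h / 2) = (2 * z - i) * h / 2 := by ring
    rw [hS]
    simp only [hξ, harg, add_sub_cancel_left]
    exact hκ.abs_sum_cellMoment_le hh hi0 hi
  have hmain : |D / 6 * S| ≤ K * (h ^ 4 * κ (min (ξ - a) (a + M * h - ξ))) := by
    rw [abs_mul]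
    gcongr
    · exact hf.const_nonneg hξmem
    · rw [abs_div, abs_of_pos (by norm_num : (0 : ℝ) < 6)]
      exact (div_le_self (abs_nonneg _) (by norm_num)).trans (hf.abs_deriv_le hξmem)
  calc |weightedError κ a h M f ξ| = |(weightedError κ a h M f ξ - D / 6 * S) + D / 6 * S| := by
        rw [sub_add_cancel]
    _ ≤ K * h ^ 4 * (∫ x in a..a + M * h, κ (ξ - x)) +
          K * (h ^ 4 * κ (min (ξ - a) (a + M * h - ξ))) :=
        (abs_add_le _ _).trans (add_le_add (hf.abs_weightedError_sub_le hκ hh hξmem) hmain)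
    _ = K * h ^ 4 * ((∫ x in a..a + M * h, κ (ξ - x)) + κ (min (ξ - a) (a + M * h - ξ))) := by
        ring

theorem IsWeaklySingular.integral_add_le_errorConst_mul (hκ : IsWeaklySingular κ) {b η : ℝ}
    (hξ : ξ ∈ Icc a b) (hη : η ∈ Ioc 0 (b - a)) :
    (∫ x in a..b, κ (ξ - x)) + κ η ≤ errorConst κ (b - a) * κ η := by
  have hℓ : 0 < b - a := hη.1.trans_le hη.2
  have hκℓ : 0 < κ (b - a) := hκ.pos hℓ
  have hmass : 0 ≤ ∫ t in -(b - a)..(b - a), κ t :=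
    intervalIntegral.integral_nonneg (by linarith) fun _ _ => hκ.nonneg _
  rw [errorConst, add_one_mul]
  gcongr
  calc ∫ x in a..b, κ (ξ - x) ≤ ∫ t in -(b - a)..(b - a), κ t := hκ.integral_sub_left_le hξ
    _ = (∫ t in -(b - a)..(b - a), κ t) / κ (b - a) * κ (b - a) :=
        (div_mul_cancel₀ _ hκℓ.ne').symm
    _ ≤ (∫ t in -(b - a)..(b - a), κ t) / κ (b - a) * κ η := by
        gcongr
        exact hκ.antitoneOn hη.1 hℓ hη.2

theorem HasLipschitzThirdDeriv.abs_weightedError_node_le_errorConst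
    (hf : HasLipschitzThirdDeriv f (Icc a (a + M * h)) K) (hκ : IsWeaklySingular κ) (hh : 0 < h)
    (hi0 : 0 < i) (hi : i < 2 * M) (hξ : ξ = a + i * h / 2) :
    |weightedError κ a h M f ξ| ≤
      K * errorConst κ (M * h) * (h ^ 4 * κ (min (ξ - a) (a + M * h - ξ))) := by
  have hξmem : ξ ∈ Icc a (a + M * h) := hξ ▸ node_mem_Icc a hh.le hi.le
  have hη : min (ξ - a) (a + M * h - ξ) ∈ Ioc 0 (a + M * h - a) := by
    rw [hξ, add_sub_cancel_left a (M * h)]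
    exact min_node_sub_mem_Ioc a hh hi0 hi
  have habsorb := hκ.integral_add_le_errorConst_mul hξmem hη
  rw [add_sub_cancel_left] at habsorb
  have hK : 0 ≤ K := hf.const_nonneg hξmem
  calc |weightedError κ a h M f ξ|
      ≤ K * h ^ 4 * ((∫ x in a..a + M * h, κ (ξ - x)) + κ (min (ξ - a) (a + M * h - ξ))) :=
        hf.abs_weightedError_node_le hκ hh hi0 hi hξ
    _ ≤ K * h ^ 4 * (errorConst κ (M * h) * κ (min (ξ - a) (a + M * h - ξ))) := by gcongr
    _ = K * errorConst κ (M * h) * (h ^ 4 * κ (min (ξ - a) (a + M * h - ξ))) := by ring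

end weightedError

section slices

variable {s t : Set ℝ} {f : ℝ → ℝ} {F : ℝ × ℝ → ℝ}

theorem derivWithin_slice (hs : UniqueDiffOn ℝ s) (hF : DifferentiableOn ℝ F (s ×ˢ t)) {x y : ℝ}
    (hx : x ∈ s) (hy : y ∈ t) :
    derivWithin (fun x => F (x, y)) s x = fderivWithin ℝ F (s ×ˢ t) (x, y) (1, 0) := by
  have hslice : HasDerivWithinAt (fun x : ℝ => (x, y)) ((1 : ℝ), (0 : ℝ)) s x :=
    (hasDerivWithinAt_id x s).prodMk (hasDerivWithinAt_const x s y)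
  have hmaps : MapsTo (fun x => (x, y)) s (s ×ˢ t) := fun z hz => ⟨hz, hy⟩
  have hFslice := (hF (x, y) ⟨hx, hy⟩).hasFDerivWithinAt.comp_hasDerivWithinAt x hslice hmaps
  exact hFslice.derivWithin (hs x hx)

theorem exists_continuousOn_iteratedDerivWithin_slice (hs : UniqueDiffOn ℝ s)
    (ht : UniqueDiffOn ℝ t) {n : ℕ} (hF : ContDiffOn ℝ n F (s ×ˢ t)) :
    ∃ G : ℝ × ℝ → ℝ, ContinuousOn G (s ×ˢ t) ∧
      ∀ y ∈ t, ∀ x ∈ s, iteratedDerivWithin n (fun x => F (x, y)) s x = G (x, y) := by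
  induction n generalizing F with
  | zero => exact ⟨F, hF.continuousOn, fun y _ x _ => by rw [iteratedDerivWithin_zero]⟩
  | succ n ih =>
    have hpartial : ContDiffOn ℝ n (fun p => fderivWithin ℝ F (s ×ˢ t) p (1, 0)) (s ×ˢ t) :=
      (hF.fderivWithin (hs.prod ht) (by norm_cast)).clm_apply contDiffOn_const
    obtain ⟨G, hG, hGeq⟩ := ih hpartial
    refine ⟨G, hG, fun y hy x hx => ?_⟩
    rw [iteratedDerivWithin_succ', ← hGeq y hy x hx]
    exact iteratedDerivWithin_congr
      (fun z hz => derivWithin_slice hs (hF.differentiableOn (by norm_cast)) hz hy) hx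

theorem HasLipschitzThirdDeriv.of_contDiffOn {K : ℝ} (hs : Convex ℝ s) (hus : UniqueDiffOn ℝ s)
    (hf : ContDiffOn ℝ 4 f s) (hf3 : ∀ x ∈ s, |iteratedDerivWithin 3 f s x| ≤ K)
    (hf4 : ∀ x ∈ s, |iteratedDerivWithin 4 f s x| ≤ K) : HasLipschitzThirdDeriv f s K where
  contDiffOn := hf.of_le (by norm_num)
  abs_deriv_le := hf3
  abs_deriv_sub_le x hx y hy := by
    refine hs.norm_image_sub_le_of_norm_derivWithin_le
      (hf.differentiableOn_iteratedDerivWithin (by norm_num) hus) (fun z hz => ?_) hy hx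
    rw [← iteratedDerivWithin_succ]
    exact hf4 z hz

theorem exists_hasLipschitzThirdDeriv_slice (hs : Convex ℝ s) (hus : UniqueDiffOn ℝ s)
    (hsc : IsCompact s) (hut : UniqueDiffOn ℝ t) (htc : IsCompact t)
    (hF : ContDiffOn ℝ 4 F (s ×ˢ t)) :
    ∃ K, ∀ y ∈ t, HasLipschitzThirdDeriv (fun x => F (x, y)) s K := by
  have exists_bound {n : ℕ} (hn : n ≤ 4) :
      ∃ K, ∀ y ∈ t, ∀ x ∈ s, |iteratedDerivWithin n (fun x => F (x, y)) s x| ≤ K := by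
    obtain ⟨G, hG, hGeq⟩ :=
      exists_continuousOn_iteratedDerivWithin_slice hus hut (hF.of_le (mod_cast hn))
    obtain ⟨K, hK⟩ := (hsc.prod htc).exists_bound_of_continuousOn hG
    exact ⟨K, fun y hy x hx => hGeq y hy x hx ▸ hK (x, y) ⟨hx, hy⟩⟩
  obtain ⟨K₃, hK₃⟩ := exists_bound (n := 3) (by norm_num)
  obtain ⟨K₄, hK₄⟩ := exists_bound (n := 4) le_rfl
  refine ⟨max K₃ K₄, fun y hy => .of_contDiffOn hs hus ?_
    (fun x hx => (hK₃ y hy x hx).trans (le_max_left _ _))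
    fun x hx => (hK₄ y hy x hx).trans (le_max_right _ _)⟩
  exact hF.comp (by fun_prop) fun x hx => ⟨hx, hy⟩

theorem continuousOn_integral_mul {u : ℝ → ℝ → ℝ} {g : ℝ → ℝ} {a b : ℝ} (htc : IsCompact t)
    (hu : ContinuousOn (Function.uncurry u) (uIcc a b ×ˢ t))
    (hg : IntervalIntegrable g volume a b) :
    ContinuousOn (fun y => ∫ x in a..b, u x y * g x) t := by
  obtain ⟨B, hB⟩ := (isCompact_uIcc.prod htc).exists_bound_of_continuousOn hu
  have hslice : ∀ y ∈ t, ContinuousOn (fun x => u x y) (uIcc a b) := fun y hy =>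
    hu.comp (f := fun x => (x, y)) (by fun_prop) fun x hx => ⟨hx, hy⟩
  intro y₀ hy₀
  refine intervalIntegral.continuousWithinAt_of_dominated_interval
    (bound := fun x => B * ‖g x‖) ?_ ?_ (hg.norm.const_mul B) ?_
  · filter_upwards [self_mem_nhdsWithin] with y hy
    exact (hg.continuousOn_mul (hslice y hy)).def'.aestronglyMeasurable
  · filter_upwards [self_mem_nhdsWithin] with y hy
    refine .of_forall fun x hx => ?_
    rw [norm_mul]
    exact mul_le_mul_of_nonneg_right (hB (x, y) ⟨uIoc_subset_uIcc hx, hy⟩) (norm_nonneg _)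
  · refine .of_forall fun x hx => ?_
    have hux : ContinuousOn (u x) t := hu.comp (f := fun y => (x, y)) (by fun_prop)
      fun y hy => ⟨uIoc_subset_uIcc hx, hy⟩
    exact (hux y₀ hy₀).mul continuousWithinAt_const

end slices

section tensor

variable {κ κ' : ℝ → ℝ} {u : ℝ → ℝ → ℝ} {a c hx hy K L ξ υ : ℝ} {Mx My i j : ℕ}

theorem continuousOn_weightedError (hκ : IsWeaklySingular κ) (hhx : 0 < hx) {t : Set ℝ}
    (ht : IsCompact t) (hu : ContinuousOn (Function.uncurry u) (Icc a (a + Mx * hx) ×ˢ t)) :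
    ContinuousOn (fun y => weightedError κ a hx Mx (fun x => u x y) ξ) t := by
  have hab : a ≤ a + Mx * hx := le_add_of_nonneg_right (by positivity)
  have hslice : ∀ x ∈ Icc a (a + Mx * hx), ContinuousOn (u x) t := fun x hxab =>
    hu.comp (f := fun y => (x, y)) (by fun_prop) fun y hyt => ⟨hxab, hyt⟩
  refine ContinuousOn.congr (f := fun y => (∫ x in a..a + Mx * hx, u x y * κ (ξ - x)) -
      ∑ l ∈ Finset.range (2 * Mx + 1), quadWeight κ a hx Mx ξ l * u (a + l * hx / 2) y)
    (.sub ?_ (continuousOn_finsetSum _ fun l hl => continuousOn_const.mul (hslice _ ?_)))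
    fun y hyt => weightedError_eq_sub_sum hκ hhx
      (hu.comp (f := fun x => (x, y)) (by fun_prop) fun x hxab => ⟨hxab, hyt⟩)
  · rw [← uIcc_of_le hab] at hu
    exact continuousOn_integral_mul ht hu (hκ.intervalIntegrable_sub_left ξ _ _)
  · exact node_mem_Icc a hhx.le (Nat.lt_succ_iff.1 (Finset.mem_range.1 hl))

/- The error splits into the `x`-interpolation error and the `x`-interpolant of the
`y`-interpolation error. -/
theorem integral_sub_quadInterp_mul (hκ : IsWeaklySingular κ) (hhx : 0 < hx) {y : ℝ}
    (hu : ContinuousOn (fun x => u x y) (Icc a (a + Mx * hx))) :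
    ∫ x in a..a + Mx * hx, (u x y - quadInterp a c hx hy Mx My u x y) * κ (ξ - x) =
      weightedError κ a hx Mx (fun x => u x y) ξ +
        ∑ l ∈ Finset.range (2 * Mx + 1), quadWeight κ a hx Mx ξ l *
          (u (a + l * hx / 2) y - quadInterpOne c hy My (u (a + l * hx / 2)) y) := by
  set e : ℝ → ℝ := fun x => u x y - quadInterpOne c hy My (u x) y
  have hsplit (x : ℝ) : u x y - quadInterp a c hx hy Mx My u x y =
      (u x y - quadInterpOne a hx Mx (fun x => u x y) x) + quadInterpOne a hx Mx e x := by
    simp only [quadInterp_eq_sum, quadInterpOne, e, mul_sub, Finset.sum_sub_distrib]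
    ring
  simp only [hsplit, add_mul]
  rw [intervalIntegral.integral_add, integral_quadInterpOne_mul hκ hhx, weightedError]
  · exact intervalIntegrable_sub_quadInterpOne_mul hκ hhx hu
  · exact (hκ.intervalIntegrable_sub_left ξ _ _).continuousOn_mul
      (continuous_quadInterpOne hhx _ _).continuousOn

theorem integral_integral_sub_quadInterp_mul (hκ : IsWeaklySingular κ)
    (hκ' : IsWeaklySingular κ') (hhx : 0 < hx) (hhy : 0 < hy)
    (hu : ContinuousOn (Function.uncurry u) (Icc a (a + Mx * hx) ×ˢ Icc c (c + My * hy))) :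
    ∫ y in c..c + My * hy, ∫ x in a..a + Mx * hx,
        (u x y - quadInterp a c hx hy Mx My u x y) * (κ (ξ - x) * κ' (υ - y)) =
      (∫ y in c..c + My * hy, weightedError κ a hx Mx (fun x => u x y) ξ * κ' (υ - y)) +
        ∑ l ∈ Finset.range (2 * Mx + 1), quadWeight κ a hx Mx ξ l *
          weightedError κ' c hy My (u (a + l * hx / 2)) υ := by
  have hcd : uIcc c (c + My * hy) = Icc c (c + My * hy) :=
    uIcc_of_le (le_add_of_nonneg_right (by positivity))
  have herr : ∀ l ∈ Finset.range (2 * Mx + 1), IntervalIntegrable (fun y =>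
      quadWeight κ a hx Mx ξ l * ((u (a + l * hx / 2) y -
        quadInterpOne c hy My (u (a + l * hx / 2)) y) * κ' (υ - y))) volume c (c + My * hy) :=
    fun l hl => (intervalIntegrable_sub_quadInterpOne_mul hκ' hhy <|
      hu.comp (f := fun y => (a + l * hx / 2, y)) (by fun_prop) fun y hycd =>
        ⟨node_mem_Icc a hhx.le (Nat.lt_succ_iff.1 (Finset.mem_range.1 hl)), hycd⟩).const_mul _
  have hinner : ∀ y ∈ uIcc c (c + My * hy), ∫ x in a..a + Mx * hx,
      (u x y - quadInterp a c hx hy Mx My u x y) * (κ (ξ - x) * κ' (υ - y)) =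
      weightedError κ a hx Mx (fun x => u x y) ξ * κ' (υ - y) +
        ∑ l ∈ Finset.range (2 * Mx + 1), quadWeight κ a hx Mx ξ l * ((u (a + l * hx / 2) y -
          quadInterpOne c hy My (u (a + l * hx / 2)) y) * κ' (υ - y)) := by
    intro y hycd
    rw [hcd] at hycd
    simp only [← mul_assoc]
    rw [intervalIntegral.integral_mul_const, integral_sub_quadInterp_mul hκ hhx, add_mul,
      Finset.sum_mul]
    exact hu.comp (f := fun x => (x, y)) (by fun_prop) fun x hxab => ⟨hxab, hycd⟩
  rw [intervalIntegral.integral_congr hinner, intervalIntegral.integral_add,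
    intervalIntegral.integral_finsetSum herr]
  · simp only [intervalIntegral.integral_const_mul, weightedError]
  · exact (hκ'.intervalIntegrable_sub_left υ _ _).continuousOn_mul
      (hcd ▸ continuousOn_weightedError hκ hhx isCompact_Icc hu)
  · simpa only [Finset.sum_fn] using IntervalIntegrable.sum _ herr

theorem abs_integral_mul_le {g : ℝ → ℝ} {b B : ℝ} (hκ : IsWeaklySingular κ)
    (hξ : ξ ∈ Icc a b) (hB : 0 ≤ B) (hg : ∀ x ∈ Icc a b, |g x| ≤ B) :
    |∫ x in a..b, g x * κ (ξ - x)| ≤ B * ∫ t in -(b - a)..(b - a), κ t := by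
  have hab : a ≤ b := hξ.1.trans hξ.2
  calc |∫ x in a..b, g x * κ (ξ - x)| ≤ ∫ x in a..b, B * κ (ξ - x) := by
        rw [← Real.norm_eq_abs]
        refine intervalIntegral.norm_integral_le_of_norm_le hab
          (Filter.Eventually.of_forall fun x hxab => ?_)
          ((hκ.intervalIntegrable_sub_left ξ a b).const_mul B)
        rw [Real.norm_eq_abs, abs_mul, abs_of_nonneg (hκ.nonneg _)]
        exact mul_le_mul_of_nonneg_right (hg x (Ioc_subset_Icc_self hxab)) (hκ.nonneg _)
    _ ≤ B * ∫ t in -(b - a)..(b - a), κ t := by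
        rw [intervalIntegral.integral_const_mul]
        gcongr
        exact hκ.integral_sub_left_le hξ

theorem abs_sum_quadWeight_mul_le {g : ℕ → ℝ} {B : ℝ} (hκ : IsWeaklySingular κ) (hhx : 0 < hx)
    (hξ : ξ ∈ Icc a (a + Mx * hx)) (hB : 0 ≤ B) (hg : ∀ l ≤ 2 * Mx, |g l| ≤ B) :
    |∑ l ∈ Finset.range (2 * Mx + 1), quadWeight κ a hx Mx ξ l * g l| ≤
      3 * (∫ t in -(Mx * hx)..(Mx * hx), κ t) * B := by
  calc |∑ l ∈ Finset.range (2 * Mx + 1), quadWeight κ a hx Mx ξ l * g l|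
      ≤ ∑ l ∈ Finset.range (2 * Mx + 1), |quadWeight κ a hx Mx ξ l| * B := by
        refine (Finset.abs_sum_le_sum_abs _ _).trans (Finset.sum_le_sum fun l hl => ?_)
        rw [abs_mul]
        gcongr
        exact hg l (Nat.lt_succ_iff.1 (Finset.mem_range.1 hl))
    _ ≤ 3 * (∫ t in -(Mx * hx)..(Mx * hx), κ t) * B := by
        rw [← Finset.sum_mul]
        gcongr
        refine (sum_abs_quadWeight_le hκ hhx Mx ξ).trans ?_
        gcongr
        simpa only [add_sub_cancel_left] using hκ.integral_sub_left_le hξ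

theorem abs_integral_sub_quadInterp_mul_le (hκ : IsWeaklySingular κ) (hκ' : IsWeaklySingular κ')
    (hhx : 0 < hx) (hhy : 0 < hy)
    (hu : ContinuousOn (Function.uncurry u) (Icc a (a + Mx * hx) ×ˢ Icc c (c + My * hy)))
    (hux : ∀ y ∈ Icc c (c + My * hy),
      HasLipschitzThirdDeriv (fun x => u x y) (Icc a (a + Mx * hx)) K)
    (huy : ∀ x ∈ Icc a (a + Mx * hx), HasLipschitzThirdDeriv (u x) (Icc c (c + My * hy)) L)
    (hi0 : 0 < i) (hi : i < 2 * Mx) (hj0 : 0 < j) (hj : j < 2 * My)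
    (hξ : ξ = a + i * hx / 2) (hυ : υ = c + j * hy / 2) :
    |∫ y in c..c + My * hy, ∫ x in a..a + Mx * hx,
        (u x y - quadInterp a c hx hy Mx My u x y) * (κ (ξ - x) * κ' (υ - y))| ≤
      K * errorConst κ (Mx * hx) * (∫ t in -(My * hy)..(My * hy), κ' t) *
          (hx ^ 4 * κ (min (ξ - a) (a + Mx * hx - ξ))) +
        3 * (∫ t in -(Mx * hx)..(Mx * hx), κ t) * (L * errorConst κ' (My * hy)) *
          (hy ^ 4 * κ' (min (υ - c) (c + My * hy - υ))) := by
  have hξmem : ξ ∈ Icc a (a + Mx * hx) := hξ ▸ node_mem_Icc a hhx.le hi.le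
  have hυmem : υ ∈ Icc c (c + My * hy) := hυ ▸ node_mem_Icc c hhy.le hj.le
  have hxerr : ∀ y ∈ Icc c (c + My * hy), |weightedError κ a hx Mx (fun x => u x y) ξ| ≤
      K * errorConst κ (Mx * hx) * (hx ^ 4 * κ (min (ξ - a) (a + Mx * hx - ξ))) := fun y hycd =>
    (hux y hycd).abs_weightedError_node_le_errorConst hκ hhx hi0 hi hξ
  have hyerr : ∀ x ∈ Icc a (a + Mx * hx), |weightedError κ' c hy My (u x) υ| ≤
      L * errorConst κ' (My * hy) * (hy ^ 4 * κ' (min (υ - c) (c + My * hy - υ))) := fun x hxab =>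
    (huy x hxab).abs_weightedError_node_le_errorConst hκ' hhy hj0 hj hυ
  have hxint := abs_integral_mul_le hκ' hυmem ((abs_nonneg _).trans (hxerr υ hυmem)) hxerr
  have hysum := abs_sum_quadWeight_mul_le hκ hhx hξmem ((abs_nonneg _).trans (hyerr ξ hξmem))
    fun l hl => hyerr (a + l * hx / 2) (node_mem_Icc a hhx.le hl)
  rw [add_sub_cancel_left, mul_right_comm] at hxint
  rw [← mul_assoc] at hysum
  rw [integral_integral_sub_quadInterp_mul hκ hκ' hhx hhy hu]
  exact (abs_add_le _ _).trans (add_le_add hxint hysum)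

end tensor

theorem exists_hasLipschitzThirdDeriv_slices {a b c d : ℝ} (hab : a < b) (hcd : c < d)
    {u : ℝ → ℝ → ℝ} (hu : ContDiffOn ℝ 4 (Function.uncurry u) (Icc a b ×ˢ Icc c d)) :
    ∃ K L, (∀ y ∈ Icc c d, HasLipschitzThirdDeriv (fun x => u x y) (Icc a b) K) ∧
      ∀ x ∈ Icc a b, HasLipschitzThirdDeriv (u x) (Icc c d) L := by
  obtain ⟨K, hK⟩ := exists_hasLipschitzThirdDeriv_slice (convex_Icc a b) (uniqueDiffOn_Icc hab)
    isCompact_Icc (uniqueDiffOn_Icc hcd) isCompact_Icc hu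
  obtain ⟨L, hL⟩ := exists_hasLipschitzThirdDeriv_slice (convex_Icc c d) (uniqueDiffOn_Icc hcd)
    isCompact_Icc (uniqueDiffOn_Icc hab) isCompact_Icc
    (hu.comp (f := Prod.swap) (contDiff_snd.prodMk contDiff_fst).contDiffOn
      fun _ hp => ⟨hp.2, hp.1⟩)
  exact ⟨K, L, hK, hL⟩

theorem stmt9_general {κ κ' : ℝ → ℝ} (hκ : IsWeaklySingular κ) (hκ' : IsWeaklySingular κ')
    {a b c d : ℝ} (hab : a < b) (hcd : c < d) {u : ℝ → ℝ → ℝ}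
    (hu : ContDiffOn ℝ 4 (Function.uncurry u) (Icc a b ×ˢ Icc c d)) :
    ∃ C > 0, ∀ Mx My i j : ℕ, 0 < i → i < 2 * Mx → 0 < j → j < 2 * My →
      ∀ hx hy xi yj ei ej : ℝ,
        hx = (b - a) / Mx → hy = (d - c) / My →
        xi = a + (i : ℝ) * hx / 2 → yj = c + (j : ℝ) * hy / 2 →
        ei = min (xi - a) (b - xi) → ej = min (yj - c) (d - yj) →
        |∫ y in c..d, ∫ x in a..b,
            (u x y - quadInterp a c hx hy Mx My u x y) * (κ (xi - x) * κ' (yj - y))| ≤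
          C * (hx ^ 4 * κ ei + hy ^ 4 * κ' ej) := by
  obtain ⟨K, L, hux, huy⟩ := exists_hasLipschitzThirdDeriv_slices hab hcd hu
  set A := K * errorConst κ (b - a) * ∫ t in -(d - c)..(d - c), κ' t with hA
  set B := 3 * (∫ t in -(b - a)..(b - a), κ t) * (L * errorConst κ' (d - c)) with hB
  refine ⟨max 1 (max A B), by positivity, ?_⟩
  rintro Mx My i j hi0 hi hj0 hj hx hy xi yj ei ej hhx hhy hxi hyj rfl rfl
  obtain ⟨hhx0, rfl⟩ := mesh_pos_and_add_mul_mesh hab (by omega) hhx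
  obtain ⟨hhy0, rfl⟩ := mesh_pos_and_add_mul_mesh hcd (by omega) hhy
  have hmain := abs_integral_sub_quadInterp_mul_le hκ hκ' hhx0 hhy0 hu.continuousOn hux huy
    hi0 hi hj0 hj hxi hyj
  rw [add_sub_cancel_left, add_sub_cancel_left] at hA hB
  rw [← hA, ← hB] at hmain
  refine hmain.trans ?_
  rw [mul_add]
  gcongr
  · exact mul_nonneg (by positivity) (hκ.nonneg _)
  · simp
  · exact mul_nonneg (by positivity) (hκ'.nonneg _)
  · simp

/-- Quasi-optimal error estimate for piecewise quadratic interpolation against the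
multiplicative Cauchy kernel: for `u ∈ C⁶([a,b]×[c,d])` there is `C > 0` such that
for all mesh sizes and interior collocation indices,
`|∫∫ (u − u_Q)(x,y) |x_{i/2} − x|^{−γ} |y_{j/2} − y|^{−γ} dx dy|
  ≤ C (h_x⁴ η_{i/2}^{−γ} + h_y⁴ η̃_{j/2}^{−γ} + h_x^{5−γ} + h_y^{5−γ})`. -/
theorem stmt9 (γ a b c d : ℝ) (hγ0 : 0 < γ) (hγ1 : γ < 1) (hab : a < b) (hcd : c < d)
    (u : ℝ → ℝ → ℝ)
    (hu : ContDiffOn ℝ 6 (Function.uncurry u) (Set.Icc a b ×ˢ Set.Icc c d)) :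
    ∃ C > 0, ∀ Mx My : ℕ, 1 ≤ Mx → 1 ≤ My →
      ∀ i j : ℕ, 1 ≤ i → i ≤ 2 * Mx - 1 → 1 ≤ j → j ≤ 2 * My - 1 →
      ∀ hx hy xi yj ei ej : ℝ,
        hx = (b - a) / Mx → hy = (d - c) / My →
        xi = a + (i : ℝ) * hx / 2 → yj = c + (j : ℝ) * hy / 2 →
        ei = min (xi - a) (b - xi) → ej = min (yj - c) (d - yj) →
        |∫ y' in c..d, ∫ x' in a..b,
            (u x' y' - quadInterp a c hx hy Mx My u x' y') *
              (|xi - x'| ^ (-γ) * |yj - y'| ^ (-γ))| ≤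
          C * (hx ^ 4 * ei ^ (-γ) + hy ^ 4 * ej ^ (-γ)
              + hx ^ ((5 : ℝ) - γ) + hy ^ ((5 : ℝ) - γ)) := by
  have hκ : IsWeaklySingular fun s => |s| ^ (-γ) := isWeaklySingular_abs_rpow_neg hγ0.le hγ1
  obtain ⟨C, hC, hbound⟩ := stmt9_general hκ hκ hab hcd (hu.of_le (by norm_num))
  refine ⟨C, hC, fun Mx My hMx hMy i j hi0 hi hj0 hj hx hy xi yj ei ej hhx hhy hxi hyj hei hej =>
    ?_⟩
  have hei0 : 0 < ei := hei ▸ hxi ▸ min_node_sub_pos hab hhx hi0 (by omega)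
  have hej0 : 0 < ej := hej ▸ hyj ▸ min_node_sub_pos hcd hhy hj0 (by omega)
  have hhx0 : 0 < hx := (mesh_pos_and_add_mul_mesh hab hMx hhx).1
  have hhy0 : 0 < hy := (mesh_pos_and_add_mul_mesh hcd hMy hhy).1
  have hmain := hbound Mx My i j hi0 (by omega) hj0 (by omega) hx hy xi yj ei ej hhx hhy hxi hyj
    hei hej
  rw [abs_of_pos hei0, abs_of_pos hej0] at hmain
  refine hmain.trans (mul_le_mul_of_nonneg_left ?_ hC.le)
  rw [add_assoc _ (hx ^ (5 - γ))]
  exact le_add_of_nonneg_right (by positivity)
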